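/- (Theorem 4: Soundness of the relational VCGen.) Let ψ be a procedure environment, Φ a relational contract environment, (c_k)_{k=1}^n a sequence of commands, P a relational precondition for n commands and Q a relational postcondition for n commands. Assume: (1) Tf_r(Φ, ψ); (2) for all sequences of memory states (σ_k)_{k=1}^n and all procedure environments ψ', if P((σ_k)) and Tpr(Φ, ψ) then Ta_r((c_k)_{k=1}^n, (σ_k), Φcall(Φ, ψ')); and (3) for all sequences of memory states (σ_k)_{k=1}^n, (σ'_k)_{k=1}^n and all procedure environments ψ', if P((σ_k)) and Tpr(Φ, ψ) then Tr((c_k)_{k=1}^n, (σ_k), (σ'_k), Φcall(Φ, ψ'), λp. p ⇒ Q((σ_k), (σ'_k))). Then the relational Hoare triple ψ ⊨ {P} (c_k)_{k=1}^n {Q} holds. -/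

import Mathlib

/-- Memory states: location `x_i` holds value `σ i`. -/
abbrev Mem : Type := ℕ → ℕ

/-- Update `σ[i/n]`: maps `i` to `n` and agrees with `σ` elsewhere. -/
def Mem.update (σ : Mem) (i n : ℕ) : Mem := fun j => if j = i then n else σ j

inductive Aop : Type
  | add | mul | sub

def Aop.eval : Aop → ℕ → ℕ → ℕ
  | .add => fun m n => m + n
  | .mul => fun m n => m * n
  | .sub => fun m n => m - n

/-- Arithmetic expressions. -/
inductive Aexp : Type
  | const : ℕ → Aexp
  | loc : ℕ → Aexp
  | deref : ℕ → Aexp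
  | addr : ℕ → Aexp
  | binop : Aop → Aexp → Aexp → Aexp

def Aexp.eval : Aexp → Mem → ℕ
  | .const n, _ => n
  | .loc i, σ => σ i
  | .deref i, σ => σ (σ i)
  | .addr i, _ => i
  | .binop o a1 a2, σ => o.eval (a1.eval σ) (a2.eval σ)

inductive Bcmp : Type
  | le | lt | eq

def Bcmp.eval : Bcmp → ℕ → ℕ → Bool
  | .le => fun m n => decide (m ≤ n)
  | .lt => fun m n => decide (m < n)
  | .eq => fun m n => decide (m = n)

/-- Boolean expressions. -/
inductive Bexp : Type
  | tt : Bexp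
  | ff : Bexp
  | cmp : Bcmp → Aexp → Aexp → Bexp
  | and : Bexp → Bexp → Bexp
  | or : Bexp → Bexp → Bexp
  | not : Bexp → Bexp

def Bexp.eval : Bexp → Mem → Bool
  | .tt, _ => true
  | .ff, _ => false
  | .cmp o a1 a2, σ => o.eval (a1.eval σ) (a2.eval σ)
  | .and b1 b2, σ => b1.eval σ && b2.eval σ
  | .or b1 b2, σ => b1.eval σ || b2.eval σ
  | .not b, σ => !(b.eval σ)

/-- Commands, over a type `Y` of procedure names. -/
inductive Com (Y : Type) : Type
  | skip : Com Y
  | assign : ℕ → Aexp → Com Y                      -- x_i := a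
  | store : ℕ → Aexp → Com Y                       -- *x_i := a
  | seq : Com Y → Com Y → Com Y
  | assert : (Mem → Prop) → Com Y
  | cond : Bexp → Com Y → Com Y → Com Y
  | while : Bexp → (Mem → Prop) → Com Y → Com Y
  | call : Y → Com Y

/-- Big-step operational semantics `⟨c, σ⟩ →_ψ σ'`. -/
inductive BigStep {Y : Type} (ψ : Y → Com Y) : Com Y → Mem → Mem → Prop
  | skip (σ : Mem) : BigStep ψ .skip σ σ
  | assign (i : ℕ) (a : Aexp) (σ : Mem) :
      BigStep ψ (.assign i a) σ (σ.update i (a.eval σ))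
  | store (i : ℕ) (a : Aexp) (σ : Mem) :
      BigStep ψ (.store i a) σ (σ.update (σ i) (a.eval σ))
  | seq {c1 c2 : Com Y} {σ σ'' σ' : Mem} :
      BigStep ψ c1 σ σ'' → BigStep ψ c2 σ'' σ' → BigStep ψ (.seq c1 c2) σ σ'
  | assert (P : Mem → Prop) (σ : Mem) : BigStep ψ (.assert P) σ σ
  | condTrue {b : Bexp} {c1 c2 : Com Y} {σ σ' : Mem} :
      b.eval σ = true → BigStep ψ c1 σ σ' → BigStep ψ (.cond b c1 c2) σ σ'
  | condFalse {b : Bexp} {c1 c2 : Com Y} {σ σ' : Mem} :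
      b.eval σ = false → BigStep ψ c2 σ σ' → BigStep ψ (.cond b c1 c2) σ σ'
  | whileTrue {b : Bexp} {I : Mem → Prop} {c : Com Y} {σ σ'' σ' : Mem} :
      b.eval σ = true → BigStep ψ c σ σ'' → BigStep ψ (.while b I c) σ'' σ' →
      BigStep ψ (.while b I c) σ σ'
  | whileFalse {b : Bexp} {I : Mem → Prop} {c : Com Y} {σ : Mem} :
      b.eval σ = false → BigStep ψ (.while b I c) σ σ
  | call {y : Y} {σ σ' : Mem} : BigStep ψ (ψ y) σ σ' → BigStep ψ (.call y) σ σ'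

/-- Hoare triple `ψ ⊨ {P} c {Q}`. -/
def HoareTriple {Y : Type} (ψ : Y → Com Y) (P : Mem → Prop) (c : Com Y)
    (Q : Mem → Mem → Prop) : Prop :=
  ∀ σ σ' : Mem, P σ → BigStep ψ c σ σ' → Q σ σ'

/-- A contract: a precondition and a postcondition. -/
abbrev Contract : Type := (Mem → Prop) × (Mem → Mem → Prop)

/-- Contract validity `ψ ⊨ φ`. -/
def ContractValid {Y : Type} (ψ : Y → Com Y) (φ : Y → Contract) : Prop :=
  ∀ y : Y, HoareTriple ψ (φ y).1 (.call y) (φ y).2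

/-- Pointwise big-step execution of a sequence of commands. -/
inductive BigSteps {Y : Type} (ψ : Y → Com Y) : List (Com Y) → List Mem → List Mem → Prop
  | nil : BigSteps ψ [] [] []
  | cons {c : Com Y} {cs : List (Com Y)} {σ σ' : Mem} {σs σs' : List Mem} :
      BigStep ψ c σ σ' → BigSteps ψ cs σs σs' →
      BigSteps ψ (c :: cs) (σ :: σs) (σ' :: σs')

/-- Relational Hoare triple `ψ ⊨ {P} (c_k) {Q}`. -/
def RHoare {Y : Type} (ψ : Y → Com Y) (P : List Mem → Prop) (cs : List (Com Y))
    (Q : List Mem → List Mem → Prop) : Prop :=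
  ∀ σs σs' : List Mem, P σs → BigSteps ψ cs σs σs' → Q σs σs'

/-- A relational contract: a relational precondition and postcondition. -/
abbrev RContract : Type := (List Mem → Prop) × (List Mem → List Mem → Prop)

/-- Relational contract validity `ψ ⊨ Φ`. -/
def RContractValid {Y : Type} (ψ : Y → Com Y) (Φ : List Y → RContract) : Prop :=
  ∀ ys : List Y, ys ≠ [] → RHoare ψ (Φ ys).1 (ys.map Com.call) (Φ ys).2

/-- Optimized main VC function `Tc`. -/
def Tc {Y : Type} : Com Y → Mem → Mem → (Y → Contract) → (Prop → Prop) → Prop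
  | .skip, σ, σ', _, f => f (σ = σ')
  | .assign i a, σ, σ', _, f => f (σ' = σ.update i (a.eval σ))
  | .store i a, σ, σ', _, f => f (σ' = σ.update (σ i) (a.eval σ))
  | .assert P', σ, σ', _, f => f (P' σ ∧ σ = σ')
  | .seq c0 c1, σ, σ', φ, f =>
      ∀ σ'' : Mem, Tc c0 σ σ'' φ (fun p1 => Tc c1 σ'' σ' φ (fun p2 => f (p1 ∧ p2)))
  | .cond b c0 c1, σ, σ', φ, f =>
      Tc c0 σ σ' φ (fun p1 => Tc c1 σ σ' φ (fun p2 =>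
        f ((b.eval σ = true → p1) ∧ (b.eval σ = false → p2))))
  | .call y, σ, σ', φ, f => f ((φ y).1 σ ∧ (φ y).2 σ σ')
  | .while b I _, σ, σ', _, f => f (I σ ∧ I σ' ∧ b.eval σ' = false)

/-- Optimized auxiliary VC function `Ta`. -/
def Ta {Y : Type} : Com Y → Mem → (Y → Contract) → Prop
  | .skip, _, _ => True
  | .assign _ _, _, _ => True
  | .store _ _, _, _ => True
  | .assert P', σ, _ => P' σ
  | .seq c0 c1, σ, φ =>
      Ta c0 σ φ ∧ ∀ σ' : Mem, Tc c0 σ σ' φ (fun p => p → Ta c1 σ' φ)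
  | .cond b c0 c1, σ, φ =>
      (b.eval σ = true → Ta c0 σ φ) ∧ (b.eval σ = false → Ta c1 σ φ)
  | .call y, σ, φ => (φ y).1 σ
  | .while b I c, σ, φ =>
      I σ ∧ (∀ σ' : Mem, I σ' → b.eval σ' = true → Ta c σ' φ) ∧
      (∀ σ' σ'' : Mem, I σ' → Tc c σ' σ'' φ (fun p => p → I σ''))

/-- Optimized procedure VC `Tf`. -/
def Tf {Y : Type} (φ : Y → Contract) (ψ : Y → Com Y) : Prop :=
  ∀ (y : Y) (σ σ' : Mem), (φ y).1 σ →
    Ta (ψ y) σ φ ∧ Tc (ψ y) σ σ' φ (fun p => p → (φ y).2 σ σ')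

/-- Naive main VC function `Tcⁿ`. -/
def Tcn {Y : Type} : Com Y → Mem → (Y → Contract) → (Mem → Prop) → Prop
  | .skip, σ, _, P => P σ
  | .assign i a, σ, _, P => P (σ.update i (a.eval σ))
  | .store i a, σ, _, P => P (σ.update (σ i) (a.eval σ))
  | .assert P', σ, _, P => P' σ → P σ
  | .seq c0 c1, σ, φ, P => Tcn c0 σ φ (fun σ'' => Tcn c1 σ'' φ P)
  | .cond b c0 c1, σ, φ, P =>
      (b.eval σ = true → Tcn c0 σ φ P) ∧ (b.eval σ = false → Tcn c1 σ φ P)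
  | .call y, σ, φ, P => ∀ σ' : Mem, (φ y).1 σ ∧ (φ y).2 σ σ' → P σ'
  | .while b I _, σ, _, P => ∀ σ' : Mem, I σ ∧ I σ' ∧ b.eval σ' = false → P σ'

/-- Naive auxiliary VC function `Taⁿ`. -/
def Tan {Y : Type} : Com Y → Mem → (Y → Contract) → Prop
  | .skip, _, _ => True
  | .assign _ _, _, _ => True
  | .store _ _, _, _ => True
  | .assert P', σ, _ => P' σ
  | .seq c0 c1, σ, φ => Tan c0 σ φ ∧ Tcn c0 σ φ (fun σ' => Tan c1 σ' φ)
  | .cond b c0 c1, σ, φ =>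
      (b.eval σ = true → Tan c0 σ φ) ∧ (b.eval σ = false → Tan c1 σ φ)
  | .call y, σ, φ => (φ y).1 σ
  | .while b I c, σ, φ =>
      I σ ∧ (∀ σ' : Mem, I σ' → b.eval σ' = true → Tan c σ' φ ∧ Tcn c σ' φ I)

/-- Naive procedure VC `Tfⁿ`. -/
def Tfn {Y : Type} (φ : Y → Contract) (ψ : Y → Com Y) : Prop :=
  ∀ (y : Y) (σ : Mem), (φ y).1 σ →
    Tan (ψ y) σ φ ∧ Tcn (ψ y) σ φ (fun σ' => (φ y).2 σ σ')

/-- Relational VC function `Tr` (recursion over the sequence of commands). -/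
def Tr {Y : Type} : List (Com Y) → List Mem → List Mem → (Y → Contract) →
    (Prop → Prop) → Prop
  | [], [], [], _, f => f True
  | c :: cs, σ :: σs, σ' :: σs', φ, f =>
      Tc c σ σ' φ (fun pn => Tr cs σs σs' φ (fun pm => f (pn ∧ pm)))
  | _, _, _, _, _ => True

/-- Relational auxiliary VC function `Ta_r`. -/
def Tar {Y : Type} : List (Com Y) → List Mem → (Y → Contract) → Prop
  | [], [], _ => True
  | c :: cs, σ :: σs, φ => Ta c σ φ ∧ Tar cs σs φ
  | _, _, _ => True

/-- `Proccall(y, σ, σ', ψ)`. -/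
def Proccall {Y : Type} (y : Y) (σ σ' : Mem) (ψ : Y → Com Y) : Prop :=
  BigStep ψ (.call y) σ σ'

/-- `Procpred`: all the calls of the sequence have taken place. -/
def Procpred {Y : Type} (ψ : Y → Com Y) : List Y → List Mem → List Mem → Prop
  | [], [], [] => True
  | y :: ys, σ :: σs, σ' :: σs' => Proccall y σ σ' ψ ∧ Procpred ψ ys σs σs'
  | _, _, _ => False

/-- `Tpr`: translation of the relational contracts into a logical formula. -/
def Tpr {Y : Type} (Φ : List Y → RContract) (ψ : Y → Com Y) : Prop :=
  ∀ (ys : List Y) (σs σs' : List Mem), ys ≠ [] →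
    Procpred ψ ys σs σs' → (Φ ys).1 σs → (Φ ys).2 σs σs'

/-- `Φcall`: reduce singleton relational contracts to standard contracts with
tracked calls. -/
def Phicall {Y : Type} (Φ : List Y → RContract) (ψ : Y → Com Y) : Y → Contract :=
  fun y =>
    (fun σ => (Φ [y]).1 [σ],
     fun σ σ' => (Φ [y]).2 [σ] [σ'] ∧ Proccall y σ σ' ψ)

/-- Relational procedure VC `Tf_r`. -/
def Tfr {Y : Type} (Φ : List Y → RContract) (ψ : Y → Com Y) : Prop :=
  ∀ (ys : List Y) (σs σs' : List Mem) (ψ' : Y → Com Y),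
    (Φ ys).1 σs → Tpr Φ ψ' →
    Tar (ys.map ψ) σs (Phicall Φ ψ') ∧
    Tr (ys.map ψ) σs σs' (Phicall Φ ψ')
      (fun p => p → (Φ ys).2 σs σs')

/-- The recursive summation command `c_sum`. -/
def csum : Com Unit :=
  .cond (.cmp .lt (.loc 1) (.loc 2))
    (.seq (.assign 3 (.binop .add (.loc 3) (.loc 1)))
      (.seq (.assign 1 (.binop .add (.loc 1) (.const 1)))
        (.call ())))
    .skip

/-- The procedure environment binding `y_sum` to `c_sum`. -/
def psum : Unit → Com Unit := fun _ => csum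

/-- Loop iteration of a relation. -/
inductive WhileRel (b : Bexp) (r : Mem → Mem → Prop) : Mem → Mem → Prop
  | done {σ : Mem} : b.eval σ = false → WhileRel b r σ σ
  | step {σ σ'' σ' : Mem} : b.eval σ = true → r σ σ'' → WhileRel b r σ'' σ' →
      WhileRel b r σ σ'

/-- Denotational execution, parametrized by the meaning of calls. -/
def Exec {Y : Type} (R : Y → Mem → Mem → Prop) : Com Y → Mem → Mem → Prop
  | .skip, σ, σ' => σ' = σ
  | .assign i a, σ, σ' => σ' = σ.update i (a.eval σ)
  | .store i a, σ, σ' => σ' = σ.update (σ i) (a.eval σ)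
  | .assert _, σ, σ' => σ' = σ
  | .seq c0 c1, σ, σ' => ∃ σ'', Exec R c0 σ σ'' ∧ Exec R c1 σ'' σ'
  | .cond b c0 c1, σ, σ' =>
      (b.eval σ = true ∧ Exec R c0 σ σ') ∨ (b.eval σ = false ∧ Exec R c1 σ σ')
  | .while b _ c, σ, σ' => WhileRel b (Exec R c) σ σ'
  | .call y, σ, σ' => R y σ σ'

/-- Replace every call by a command. -/
def inlineCalls {Y : Type} (s : Y → Com Y) : Com Y → Com Y
  | .skip => .skip
  | .assign i a => .assign i a
  | .store i a => .store i a
  | .assert P => .assert P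
  | .seq c0 c1 => .seq (inlineCalls s c0) (inlineCalls s c1)
  | .cond b c0 c1 => .cond b (inlineCalls s c0) (inlineCalls s c1)
  | .while b I c => .while b I (inlineCalls s c)
  | .call y => s y

theorem bigStep_while_iff {Y : Type} (ψ : Y → Com Y) (b : Bexp) (I : Mem → Prop) (c : Com Y)
    (r : Mem → Mem → Prop) (h : ∀ σ σ', BigStep ψ c σ σ' ↔ r σ σ') (σ σ' : Mem) :
    BigStep ψ (.while b I c) σ σ' ↔ WhileRel b r σ σ' := by
  constructor
  · intro hb
    generalize hd : Com.while b I c = d at hb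
    induction hb with
    | whileTrue hb h1 h2 _ ih =>
      cases hd
      exact .step hb ((h _ _).1 h1) (ih rfl)
    | whileFalse hb => cases hd; exact .done hb
    | _ => cases hd
  · intro hw
    induction hw with
    | done hb => exact .whileFalse hb
    | step hb h1 _ ih => exact .whileTrue hb ((h _ _).2 h1) ih

theorem bigStep_inline {Y : Type} (s : Y → Com Y) (R : Y → Mem → Mem → Prop)
    (ψ : Y → Com Y) (h : ∀ y σ σ', BigStep ψ (s y) σ σ' ↔ R y σ σ') (c : Com Y) :
    ∀ σ σ', BigStep ψ (inlineCalls s c) σ σ' ↔ Exec R c σ σ' := by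
  induction c with
  | skip =>
    intro σ σ'
    constructor
    · intro hb; cases hb; rfl
    · intro he; cases he; exact .skip _
  | assign i a =>
    intro σ σ'
    constructor
    · intro hb; cases hb; rfl
    · intro he; cases he; exact .assign _ _ _
  | store i a =>
    intro σ σ'
    constructor
    · intro hb; cases hb; rfl
    · intro he; cases he; exact .store _ _ _
  | assert P =>
    intro σ σ'
    constructor
    · intro hb; cases hb; rfl
    · intro he; cases he; exact .assert _ _
  | seq c0 c1 ih0 ih1 =>
    intro σ σ'
    constructor
    · intro hb
      cases hb with
      | seq a b => exact ⟨_, (ih0 _ _).1 a, (ih1 _ _).1 b⟩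
    · rintro ⟨_, a, b⟩
      exact .seq ((ih0 _ _).2 a) ((ih1 _ _).2 b)
  | cond b c0 c1 ih0 ih1 =>
    intro σ σ'
    constructor
    · intro hb
      cases hb with
      | condTrue hb a => exact .inl ⟨hb, (ih0 _ _).1 a⟩
      | condFalse hb a => exact .inr ⟨hb, (ih1 _ _).1 a⟩
    · rintro (⟨hb, a⟩ | ⟨hb, a⟩)
      · exact .condTrue hb ((ih0 _ _).2 a)
      · exact .condFalse hb ((ih1 _ _).2 a)
  | call y => exact h y
  | _ =>
    rename_i b I c ih
    exact bigStep_while_iff ψ b I _ _ ih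

theorem exec_mono {Y : Type} {R S : Y → Mem → Mem → Prop}
    (h : ∀ y σ σ', R y σ σ' → S y σ σ') (c : Com Y) :
    ∀ σ σ', Exec R c σ σ' → Exec S c σ σ' := by
  induction c with
  | skip => exact fun _ _ => id
  | assign i a => exact fun _ _ => id
  | store i a => exact fun _ _ => id
  | assert P => exact fun _ _ => id
  | seq c0 c1 ih0 ih1 =>
    rintro σ σ' ⟨_, a, b⟩
    exact ⟨_, ih0 _ _ a, ih1 _ _ b⟩
  | cond b c0 c1 ih0 ih1 =>
    rintro σ σ' (⟨hb, a⟩ | ⟨hb, a⟩)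
    · exact .inl ⟨hb, ih0 _ _ a⟩
    · exact .inr ⟨hb, ih1 _ _ a⟩
  | call y => exact h y
  | _ =>
    rename_i b I c ih
    intro σ σ' hw
    change WhileRel _ _ _ _ at hw
    change WhileRel _ _ _ _
    induction hw with
    | done hb => exact .done hb
    | step hb h1 _ ih2 => exact .step hb (ih _ _ h1) ih2

/-- Depth-bounded meaning of calls. -/
def Rk {Y : Type} (ψ : Y → Com Y) : ℕ → Y → Mem → Mem → Prop
  | 0 => fun _ _ _ => False
  | k + 1 => fun y => Exec (Rk ψ k) (ψ y)

/-- Depth-bounded unrolling of the procedure environment. -/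
def unroll {Y : Type} (ψ : Y → Com Y) : ℕ → Y → Com Y
  | 0 => fun _ => .while .tt (fun _ => True) .skip
  | k + 1 => fun y => inlineCalls (unroll ψ k) (ψ y)

theorem bigStep_unroll {Y : Type} (ψ : Y → Com Y) (k : ℕ) :
    ∀ (ψ' : Y → Com Y) y σ σ', BigStep ψ' (unroll ψ k y) σ σ' ↔ Rk ψ k y σ σ' := by
  induction k with
  | zero =>
    intro ψ' y σ σ'
    constructor
    · intro hb
      have := (bigStep_while_iff ψ' .tt (fun _ => True) .skip _ (fun _ _ => Iff.rfl) σ σ').1 hb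
      clear hb
      change False
      induction this with
      | done h => exact Bool.noConfusion h
      | step _ _ h ih => exact ih
    · exact False.elim
  | succ k ih =>
    intro ψ' y
    exact bigStep_inline _ _ ψ' (ih ψ') (ψ y)

theorem proccall_unroll {Y : Type} (ψ : Y → Com Y) (k : ℕ) (y : Y) (σ σ' : Mem) :
    Proccall y σ σ' (unroll ψ k) ↔ Rk ψ k y σ σ' := by
  rw [← bigStep_unroll ψ k (unroll ψ k)]
  constructor
  · intro h; cases h; assumption
  · exact .call

theorem Rk_succ {Y : Type} (ψ : Y → Com Y) (k : ℕ) :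
    ∀ y σ σ', Rk ψ k y σ σ' → Rk ψ (k + 1) y σ σ' := by
  induction k with
  | zero => exact fun _ _ _ h => h.elim
  | succ k ih => exact fun y => exec_mono ih (ψ y)

theorem Rk_mono {Y : Type} (ψ : Y → Com Y) {k m : ℕ} (h : k ≤ m) :
    ∀ y σ σ', Rk ψ k y σ σ' → Rk ψ m y σ σ' := by
  induction h with
  | refl => exact fun _ _ _ => id
  | step _ ih => exact fun y σ σ' hr => Rk_succ ψ _ y σ σ' (ih y σ σ' hr)

theorem exists_exec {Y : Type} (ψ : Y → Com Y) {c : Com Y} {σ σ' : Mem}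
    (h : BigStep ψ c σ σ') : ∃ k, Exec (Rk ψ k) c σ σ' := by
  induction h with
  | skip => exact ⟨0, rfl⟩
  | assign => exact ⟨0, rfl⟩
  | store => exact ⟨0, rfl⟩
  | assert => exact ⟨0, rfl⟩
  | seq _ _ ih1 ih2 =>
    obtain ⟨k, hk⟩ := ih1
    obtain ⟨m, hm⟩ := ih2
    exact ⟨max k m, _, exec_mono (Rk_mono ψ (le_max_left k m)) _ _ _ hk,
      exec_mono (Rk_mono ψ (le_max_right k m)) _ _ _ hm⟩
  | condTrue hb _ ih => exact ih.imp fun k hk => .inl ⟨hb, hk⟩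
  | condFalse hb _ ih => exact ih.imp fun k hk => .inr ⟨hb, hk⟩
  | whileTrue hb _ _ ih1 ih2 =>
    obtain ⟨k, hk⟩ := ih1
    obtain ⟨m, hm⟩ := ih2
    exact ⟨max k m, .step hb (exec_mono (Rk_mono ψ (le_max_left k m)) _ _ _ hk)
      (exec_mono (Rk_mono ψ (le_max_right k m)) (.while _ _ _) _ _ hm)⟩
  | whileFalse hb => exact ⟨0, .done hb⟩
  | call _ ih => exact ih.elim fun k hk => ⟨k + 1, hk⟩

theorem exec_of_bigStep {Y : Type} (ψ : Y → Com Y) {c : Com Y} {σ σ' : Mem}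
    (h : BigStep ψ c σ σ') : Exec (fun y σ σ' => Proccall y σ σ' ψ) c σ σ' := by
  induction h with
  | skip => rfl
  | assign => rfl
  | store => rfl
  | assert => rfl
  | seq _ _ ih1 ih2 => exact ⟨_, ih1, ih2⟩
  | condTrue hb _ ih => exact .inl ⟨hb, ih⟩
  | condFalse hb _ ih => exact .inr ⟨hb, ih⟩
  | whileTrue hb _ _ ih1 ih2 => exact .step hb ih1 ih2
  | whileFalse hb => exact .done hb
  | call h _ => exact BigStep.call h

theorem Tc_exists {Y : Type} (φ : Y → Contract) (c : Com Y) :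
    ∀ σ σ' f, Tc c σ σ' φ f → ∃ p, f p := by
  induction c with
  | seq c0 c1 ih0 ih1 =>
    intro σ σ' f h
    obtain ⟨p, hp⟩ := ih0 _ _ _ (h σ)
    obtain ⟨q, hq⟩ := ih1 _ _ _ hp
    exact ⟨_, hq⟩
  | cond b c0 c1 ih0 ih1 =>
    intro σ σ' f h
    obtain ⟨p, hp⟩ := ih0 _ _ _ h
    obtain ⟨q, hq⟩ := ih1 _ _ _ hp
    exact ⟨_, hq⟩
  | _ => exact fun σ σ' f h => ⟨_, h⟩

theorem Tc_sound {Y : Type} (φ : Y → Contract) (R : Y → Mem → Mem → Prop)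
    (hR : ∀ y σ σ', R y σ σ' → (φ y).1 σ → (φ y).2 σ σ') (c : Com Y) :
    ∀ σ σ' f, Exec R c σ σ' → Ta c σ φ → Tc c σ σ' φ f → ∃ p, p ∧ f p := by
  induction c with
  | skip => exact fun σ σ' f he _ h => ⟨_, he.symm, h⟩
  | assign i a => exact fun σ σ' f he _ h => ⟨_, he, h⟩
  | store i a => exact fun σ σ' f he _ h => ⟨_, he, h⟩
  | assert P => exact fun σ σ' f he ha h => ⟨_, ⟨ha, he.symm⟩, h⟩
  | seq c0 c1 ih0 ih1 =>
    rintro σ σ' f ⟨σ'', e0, e1⟩ ⟨a0, a1⟩ h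
    obtain ⟨q, hq, hq'⟩ := ih0 _ _ _ e0 a0 (a1 σ'')
    obtain ⟨p, hp, hp'⟩ := ih0 _ _ _ e0 a0 (h σ'')
    obtain ⟨r, hr, hr'⟩ := ih1 _ _ _ e1 (hq' hq) hp'
    exact ⟨_, ⟨hp, hr⟩, hr'⟩
  | cond b c0 c1 ih0 ih1 =>
    rintro σ σ' f (⟨hb, e⟩ | ⟨hb, e⟩) ⟨a0, a1⟩ h
    · obtain ⟨p, hp, hp'⟩ := ih0 _ _ _ e (a0 hb) h
      obtain ⟨q, hq⟩ := Tc_exists φ c1 _ _ _ hp'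
      exact ⟨_, ⟨fun _ => hp, fun hf => by simp [hb] at hf⟩, hq⟩
    · obtain ⟨p, hp⟩ := Tc_exists φ c0 _ _ _ h
      obtain ⟨q, hq, hq'⟩ := ih1 _ _ _ e (a1 hb) hp
      exact ⟨_, ⟨fun hf => by simp [hb] at hf, fun _ => hq⟩, hq'⟩
  | call y => exact fun σ σ' f he ha h => ⟨_, ⟨ha, hR _ _ _ he ha⟩, h⟩
  | _ =>
    rename_i b I c ih
    rintro σ σ' f he ⟨hI, h1, h2⟩ h
    refine ⟨_, ⟨hI, ?_⟩, h⟩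
    clear h
    change WhileRel _ _ _ _ at he
    induction he with
    | done hb => exact ⟨hI, hb⟩
    | step hb e _ ih2 =>
      obtain ⟨p, hp, hp'⟩ := ih _ _ _ e (h1 _ hI hb) (h2 _ _ hI)
      exact ih2 (hp' hp)

/-- Pointwise execution. -/
def ExecL {Y : Type} (R : Y → Mem → Mem → Prop) : List (Com Y) → List Mem → List Mem → Prop
  | [], [], [] => True
  | c :: cs, σ :: σs, σ' :: σs' => Exec R c σ σ' ∧ ExecL R cs σs σs'
  | _, _, _ => False

theorem Tr_sound {Y : Type} (φ : Y → Contract) (R : Y → Mem → Mem → Prop)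
    (hR : ∀ y σ σ', R y σ σ' → (φ y).1 σ → (φ y).2 σ σ') (cs : List (Com Y)) :
    ∀ σs σs' f, ExecL R cs σs σs' → Tar cs σs φ → Tr cs σs σs' φ f → ∃ p, p ∧ f p := by
  induction cs with
  | nil =>
    rintro (_ | ⟨σ, σs⟩) (_ | ⟨σ', σs'⟩) f he ha h
    · exact ⟨_, trivial, h⟩
    all_goals exact he.elim
  | cons c cs ih =>
    rintro (_ | ⟨σ, σs⟩) (_ | ⟨σ', σs'⟩) f he ha h
    · exact he.elim
    · exact he.elim
    · exact he.elim
    · obtain ⟨p, hp, hp'⟩ := Tc_sound φ R hR c _ _ _ he.1 ha.1 h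
      obtain ⟨q, hq, hq'⟩ := ih _ _ _ he.2 ha.2 hp'
      exact ⟨_, ⟨hp, hq⟩, hq'⟩

theorem phicall_valid {Y : Type} (Φ : List Y → RContract) (ψ : Y → Com Y) (h : Tpr Φ ψ) :
    ∀ y σ σ', Proccall y σ σ' ψ → (Phicall Φ ψ y).1 σ → (Phicall Φ ψ y).2 σ σ' :=
  fun y σ σ' hc hp => ⟨h [y] [σ] [σ'] (by simp) ⟨hc, trivial⟩ hp, hc⟩

theorem execL_of_procpred {Y : Type} (ψ χ : Y → Com Y) (R : Y → Mem → Mem → Prop)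
    (h : ∀ y σ σ', Proccall y σ σ' χ → Exec R (ψ y) σ σ') (ys : List Y) :
    ∀ σs σs', Procpred χ ys σs σs' → ExecL R (ys.map ψ) σs σs' := by
  induction ys with
  | nil =>
    rintro (_ | ⟨σ, σs⟩) (_ | ⟨σ', σs'⟩) he <;> exact he
  | cons y ys ih =>
    rintro (_ | ⟨σ, σs⟩) (_ | ⟨σ', σs'⟩) he
    · exact he
    · exact he
    · exact he
    · exact ⟨h _ _ _ he.1, ih _ _ he.2⟩

theorem Tpr_unroll {Y : Type} (ψ : Y → Com Y) (Φ : List Y → RContract) (h1 : Tfr Φ ψ)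
    (k : ℕ) : Tpr Φ (unroll ψ k) := by
  induction k with
  | zero =>
    rintro (_ | ⟨y, ys⟩) (_ | ⟨σ, σs⟩) (_ | ⟨σ', σs'⟩) hne hp
    · exact (hne rfl).elim
    · exact (hne rfl).elim
    · exact (hne rfl).elim
    · exact (hne rfl).elim
    · exact hp.elim
    · exact hp.elim
    · exact hp.elim
    · exact ((proccall_unroll ψ 0 _ _ _).1 hp.1).elim
  | succ k ih =>
    intro ys σs σs' _ hp hpre
    obtain ⟨ha, ht⟩ := h1 ys σs σs' (unroll ψ k) hpre ih
    have he := execL_of_procpred ψ (unroll ψ (k + 1)) (fun y σ σ' => Proccall y σ σ' (unroll ψ k))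
      (fun y σ σ' hc => exec_mono (fun y σ σ' => (proccall_unroll ψ k y σ σ').2) _ _ _
        ((proccall_unroll ψ (k + 1) _ _ _).1 hc)) ys σs σs' hp
    obtain ⟨p, hp, hp'⟩ := Tr_sound _ _ (phicall_valid Φ _ ih) _ _ _ _ he ha ht
    exact hp' hp

theorem procpred_mono {Y : Type} {ψ χ : Y → Com Y}
    (h : ∀ y σ σ', Proccall y σ σ' ψ → Proccall y σ σ' χ) (ys : List Y) :
    ∀ σs σs', Procpred ψ ys σs σs' → Procpred χ ys σs σs' := by
  induction ys with
  | nil =>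
    rintro (_ | ⟨σ, σs⟩) (_ | ⟨σ', σs'⟩) he <;> exact he
  | cons y ys ih =>
    rintro (_ | ⟨σ, σs⟩) (_ | ⟨σ', σs'⟩) he
    · exact he
    · exact he
    · exact he
    · exact ⟨h _ _ _ he.1, ih _ _ he.2⟩

theorem unroll_mono {Y : Type} (ψ : Y → Com Y) {k m : ℕ} (h : k ≤ m) (y : Y) (σ σ' : Mem)
    (hc : Proccall y σ σ' (unroll ψ k)) : Proccall y σ σ' (unroll ψ m) :=
  (proccall_unroll ψ m y σ σ').2 (Rk_mono ψ h _ _ _ ((proccall_unroll ψ k y σ σ').1 hc))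

theorem exists_procpred {Y : Type} (ψ : Y → Com Y) (ys : List Y) :
    ∀ σs σs', Procpred ψ ys σs σs' → ∃ k, Procpred (unroll ψ k) ys σs σs' := by
  induction ys with
  | nil =>
    rintro (_ | ⟨σ, σs⟩) (_ | ⟨σ', σs'⟩) he <;> exact ⟨0, he⟩
  | cons y ys ih =>
    rintro (_ | ⟨σ, σs⟩) (_ | ⟨σ', σs'⟩) he
    · exact he.elim
    · exact he.elim
    · exact he.elim
    · obtain ⟨k, hk⟩ := exists_exec ψ he.1
      obtain ⟨m, hm⟩ := ih _ _ he.2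
      exact ⟨max k m, unroll_mono ψ (le_max_left k m) _ _ _ ((proccall_unroll ψ k _ _ _).2 hk),
        procpred_mono (unroll_mono ψ (le_max_right k m)) _ _ _ hm⟩

theorem Tpr_of_Tfr {Y : Type} (ψ : Y → Com Y) (Φ : List Y → RContract) (h1 : Tfr Φ ψ) :
    Tpr Φ ψ := by
  intro ys σs σs' hne hp hpre
  obtain ⟨k, hk⟩ := exists_procpred ψ ys σs σs' hp
  exact Tpr_unroll ψ Φ h1 k ys σs σs' hne hk hpre

theorem execL_of_bigSteps {Y : Type} (ψ : Y → Com Y) {cs : List (Com Y)} {σs σs' : List Mem}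
    (h : BigSteps ψ cs σs σs') : ExecL (fun y σ σ' => Proccall y σ σ' ψ) cs σs σs' := by
  induction h with
  | nil => trivial
  | cons h _ ih => exact ⟨exec_of_bigStep ψ h, ih⟩

/-- Theorem 4: soundness of the relational VCGen. -/
theorem relational_vcgen_sound {Y : Type} (ψ : Y → Com Y)
    (Φ : List Y → RContract) (cs : List (Com Y))
    (P : List Mem → Prop) (Q : List Mem → List Mem → Prop)
    (h1 : Tfr Φ ψ)
    (h2 : ∀ (σs : List Mem) (ψ' : Y → Com Y), P σs → Tpr Φ ψ →
      Tar cs σs (Phicall Φ ψ'))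
    (h3 : ∀ (σs σs' : List Mem) (ψ' : Y → Com Y), P σs → Tpr Φ ψ →
      Tr cs σs σs' (Phicall Φ ψ') (fun p => p → Q σs σs')) :
    RHoare ψ P cs Q := by 
  intro σs σs' hP hb
  have hT := Tpr_of_Tfr ψ Φ h1
  obtain ⟨p, hp, hp'⟩ := Tr_sound _ _ (phicall_valid Φ ψ hT) _ _ _ _
    (execL_of_bigSteps ψ hb) (h2 σs ψ hP hT) (h3 σs σs' ψ hP hT)
  exact hp' hp
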